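/- Let v, w ∈ L⁺ be linearly independent. Then the horocycles h(v) and h(w) intersect if and only if −⟨v,w⟩ ≤ 2 (equivalently, λ(v,w) ≤ 1); more precisely, h(v) ∩ h(w) is empty if −⟨v,w⟩ > 2, consists of exactly one point if −⟨v,w⟩ = 2, and consists of exactly two points if 0 < −⟨v,w⟩ < 2. (The signed distance between the two horocycles is negative exactly when they intersect transversally.) -/

import Mathlib

/-!
Put `p = -⟨v,w⟩`. For independent `v, w ∈ L⁺` one has `p > 0`, so `v`, `w` and their Lorentzian
cross product `u` form a basis of `ℝ³`, with `u ⟂ v, w` and `⟨u,u⟩ = p²`. The solutions of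
`⟨x,v⟩ = ⟨x,w⟩ = -1` are therefore the points `x = (v + w)/p + t u`, and for these
`⟨x,x⟩ = -2/p + t² p²`. Hence `x` lies on the two-sheeted hyperboloid iff `t² = (2 - p)/p³`,
and `⟨x,v⟩ = -1` places it on the upper sheet. The number of real roots `t` is the number of
intersection points.
-/

/-- The Minkowski bilinear form on `ℝ³`. -/
def mink (v w : Fin 3 → ℝ) : ℝ := v 0 * w 0 + v 1 * w 1 - v 2 * w 2

/-- The positive light cone `L⁺`. -/
def positiveLightCone : Set (Fin 3 → ℝ) := {v | mink v v = 0 ∧ 0 < v 2}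

/-- The upper sheet `H` of the hyperboloid `⟨x,x⟩ = -1`, a model of the hyperbolic plane. -/
def upperHyperboloid : Set (Fin 3 → ℝ) := {x | mink x x = -1 ∧ 0 < x 2}

/-- The horocycle `h(v)`; it is defined for every vector `v`, but is a horocycle in the geometric
sense only for `v ∈ L⁺`. -/
def horocycle (v : Fin 3 → ℝ) : Set (Fin 3 → ℝ) := {x | x ∈ upperHyperboloid ∧ mink x v = -1}

/-- The λ-length `λ(v,w)` of a pair of light-cone vectors; when `⟨v,w⟩ > 0` the square root takes
the junk value `0`. -/
noncomputable def lambdaLength (v w : Fin 3 → ℝ) : ℝ := √(-(mink v w) / 2)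

/-- The cross product of Minkowski 3-space: the Euclidean cross product with its last
coordinate negated, so that it is `mink`-orthogonal to both factors. -/
def lorentzCross (v w : Fin 3 → ℝ) : Fin 3 → ℝ :=
  ![v 1 * w 2 - v 2 * w 1, v 2 * w 0 - v 0 * w 2, -(v 0 * w 1 - v 1 * w 0)]

/-- For null vectors `v`, `w` with `⟨v,w⟩ ≠ 0`, a parametrization of the affine line
`⟨x,v⟩ = ⟨x,w⟩ = -1`, which contains `h(v) ∩ h(w)`. -/
noncomputable def horocycleLine (v w : Fin 3 → ℝ) (t : ℝ) : Fin 3 → ℝ :=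
  (-(mink v w))⁻¹ • (v + w) + t • lorentzCross v w

variable {v w x : Fin 3 → ℝ}

section Bilinearity

variable (v w x)

lemma mink_comm : mink v w = mink w v := by
  simp only [mink]
  ring

lemma mink_add_left : mink (v + w) x = mink v x + mink w x := by
  simp only [mink, Pi.add_apply]
  ring

lemma mink_add_right : mink x (v + w) = mink x v + mink x w := by
  rw [mink_comm, mink_add_left, mink_comm v, mink_comm w]

lemma mink_smul_left (c : ℝ) : mink (c • v) w = c * mink v w := by
  simp only [mink, Pi.smul_apply, smul_eq_mul]
  ring

lemma mink_smul_right (c : ℝ) : mink v (c • w) = c * mink v w := by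
  rw [mink_comm, mink_smul_left, mink_comm]

end Bilinearity

section Causality

lemma mink_self_nonneg_of_time_eq_zero (hx : x 2 = 0) : 0 ≤ mink x x := by
  simp only [mink, hx]
  nlinarith [mul_self_nonneg (x 0), mul_self_nonneg (x 1)]

lemma eq_zero_of_mink_self_eq_zero_of_time_eq_zero (hxx : mink x x = 0) (hx : x 2 = 0) :
    x = 0 := by
  have hsum : x 0 * x 0 + x 1 * x 1 = 0 := by simpa [mink, hx] using hxx
  obtain ⟨h0, h1⟩ := mul_self_add_mul_self_eq_zero.mp hsum
  ext i
  fin_cases i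
  exacts [h0, h1, hx]

lemma mink_time_smul_sub_self (v w : Fin 3 → ℝ) :
    mink (w 2 • v - v 2 • w) (w 2 • v - v 2 • w) =
      w 2 ^ 2 * mink v v + v 2 ^ 2 * mink w w - 2 * (v 2 * w 2) * mink v w := by
  simp only [mink, Pi.sub_apply, Pi.smul_apply, smul_eq_mul]
  ring

lemma time_smul_sub_time_eq_zero (v w : Fin 3 → ℝ) : (w 2 • v - v 2 • w) 2 = 0 := by
  simp only [Pi.sub_apply, Pi.smul_apply, smul_eq_mul]
  ring

lemma two_mul_time_mul_mink_le (v w : Fin 3 → ℝ) :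
    2 * (v 2 * w 2) * mink v w ≤ w 2 ^ 2 * mink v v + v 2 ^ 2 * mink w w := by
  have h := mink_self_nonneg_of_time_eq_zero (time_smul_sub_time_eq_zero v w)
  rw [mink_time_smul_sub_self] at h
  linarith

lemma two_mul_time_mul_mink_lt (hind : LinearIndependent ℝ ![v, w]) (hw : w 2 ≠ 0) :
    2 * (v 2 * w 2) * mink v w < w 2 ^ 2 * mink v v + v 2 ^ 2 * mink w w := by
  refine (two_mul_time_mul_mink_le v w).lt_of_ne fun heq => hw ?_
  have hnull : mink (w 2 • v - v 2 • w) (w 2 • v - v 2 • w) = 0 := by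
    rw [mink_time_smul_sub_self]
    linarith
  have hzero := eq_zero_of_mink_self_eq_zero_of_time_eq_zero hnull (time_smul_sub_time_eq_zero v w)
  rw [sub_eq_add_neg, ← neg_smul] at hzero
  exact (LinearIndependent.pair_iff.mp hind _ _ hzero).1

lemma mink_neg_of_linearIndependent (hv : mink v v ≤ 0) (hv2 : 0 < v 2) (hw : mink w w ≤ 0)
    (hw2 : 0 < w 2) (hind : LinearIndependent ℝ ![v, w]) : mink v w < 0 := by
  have hlt := two_mul_time_mul_mink_lt hind hw2.ne'
  have hle : w 2 ^ 2 * mink v v + v 2 ^ 2 * mink w w ≤ 0 :=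
    add_nonpos (mul_nonpos_of_nonneg_of_nonpos (sq_nonneg _) hv)
      (mul_nonpos_of_nonneg_of_nonpos (sq_nonneg _) hw)
  exact neg_of_mul_neg_right (hlt.trans_le hle) (by positivity)

lemma time_pos_of_mink_neg (hx : mink x x < 0) (hv : mink v v ≤ 0) (hv2 : 0 < v 2)
    (hxv : mink x v < 0) : 0 < x 2 := by
  have hneg : v 2 ^ 2 * mink x x + x 2 ^ 2 * mink v v < 0 :=
    add_neg_of_neg_of_nonpos (mul_neg_of_pos_of_neg (by positivity) hx)
      (mul_nonpos_of_nonneg_of_nonpos (sq_nonneg _) hv)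
  have hprod : 2 * (x 2 * v 2) * mink x v < 0 := (two_mul_time_mul_mink_le x v).trans_lt hneg
  have htimes : 0 < x 2 * v 2 := by
    linarith [pos_of_mul_neg_left hprod hxv.le]
  exact pos_of_mul_pos_left htimes hv2.le

end Causality

section LorentzCross

variable (v w x)

lemma mink_lorentzCross_left : mink (lorentzCross v w) v = 0 := by
  simp only [mink, lorentzCross, Matrix.cons_val]
  ring

lemma mink_lorentzCross_right : mink (lorentzCross v w) w = 0 := by
  simp only [mink, lorentzCross, Matrix.cons_val]
  ring

lemma mink_lorentzCross_self :
    mink (lorentzCross v w) (lorentzCross v w) = mink v w ^ 2 - mink v v * mink w w := by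
  simp only [mink, lorentzCross, Matrix.cons_val]
  ring

-- The Gram determinant is kept on the left so that the expansion of `x` also holds when `v`, `w`
-- and their cross product are dependent.
lemma gram_smul_eq_lorentzCross_expansion :
    (mink v w ^ 2 - mink v v * mink w w) • x =
      (mink x w * mink v w - mink x v * mink w w) • v
        + (mink x v * mink v w - mink x w * mink v v) • w
        + mink x (lorentzCross v w) • lorentzCross v w := by
  ext i
  simp only [mink, lorentzCross, Pi.add_apply, Pi.smul_apply, smul_eq_mul, Matrix.cons_val]
  fin_cases i <;> simp only [Fin.mk_zero, Fin.mk_one, Fin.reduceFinMk, Matrix.cons_val] <;> ring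

end LorentzCross

section HorocycleLine

lemma mink_horocycleLine_left (hv : mink v v = 0) (hvw : mink v w ≠ 0) (t : ℝ) :
    mink (horocycleLine v w t) v = -1 := by
  simp only [horocycleLine, mink_add_left, mink_smul_left, mink_lorentzCross_left, hv,
    mink_comm w v]
  field_simp
  ring

lemma mink_horocycleLine_right (hw : mink w w = 0) (hvw : mink v w ≠ 0) (t : ℝ) :
    mink (horocycleLine v w t) w = -1 := by
  simp only [horocycleLine, mink_add_left, mink_smul_left, mink_lorentzCross_right, hw]
  field_simp
  ring

lemma mink_horocycleLine_self (hv : mink v v = 0) (hw : mink w w = 0) (hvw : mink v w ≠ 0)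
    (t : ℝ) :
    mink (horocycleLine v w t) (horocycleLine v w t) =
      2 / mink v w + t ^ 2 * mink v w ^ 2 := by
  have hcross : mink (horocycleLine v w t) (lorentzCross v w) = t * mink v w ^ 2 := by
    rw [mink_comm, horocycleLine]
    simp only [mink_add_right, mink_smul_right, mink_lorentzCross_left, mink_lorentzCross_right,
      mink_lorentzCross_self, hv]
    ring
  conv_lhs => arg 2; rw [horocycleLine]
  rw [mink_add_right, mink_smul_right, mink_smul_right, mink_add_right,
    mink_horocycleLine_left hv hvw, mink_horocycleLine_right hw hvw, hcross]
  field_simp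
  ring

lemma exists_horocycleLine_eq (hv : mink v v = 0) (hw : mink w w = 0) (hvw : mink v w ≠ 0)
    (hxv : mink x v = -1) (hxw : mink x w = -1) : ∃ t, horocycleLine v w t = x := by
  refine ⟨mink x (lorentzCross v w) / mink v w ^ 2, ?_⟩
  have hexp := gram_smul_eq_lorentzCross_expansion v w x
  rw [hv, hw, hxv, hxw] at hexp
  ext i
  have hi := congrFun hexp i
  simp only [Pi.add_apply, Pi.smul_apply, smul_eq_mul] at hi
  simp only [horocycleLine, Pi.add_apply, Pi.smul_apply, smul_eq_mul]
  field_simp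
  linarith

lemma horocycleLine_injective (hv : mink v v = 0) (hvw : mink v w ≠ 0) :
    Function.Injective (horocycleLine v w) := by
  have hcross : lorentzCross v w ≠ 0 := by
    intro hzero
    have hself := mink_lorentzCross_self v w
    rw [hzero, hv, zero_mul, sub_zero] at hself
    exact pow_ne_zero 2 hvw (by simpa [mink] using hself.symm)
  exact (add_right_injective _).comp (smul_left_injective ℝ hcross)

end HorocycleLine

section Horocycles

lemma setOf_sq_eq_pair {c : ℝ} (hc : 0 ≤ c) : {t : ℝ | t ^ 2 = c} = {√c, -√c} := by
  ext t
  nth_rw 1 [← Real.sq_sqrt hc]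
  exact sq_eq_sq_iff_eq_or_eq_neg

lemma horocycleLine_mem_inter_iff (hv : v ∈ positiveLightCone) (hw : mink w w = 0)
    (hvw : mink v w < 0) (t : ℝ) :
    horocycleLine v w t ∈ horocycle v ∩ horocycle w ↔
      t ^ 2 = (2 + mink v w) / (-(mink v w)) ^ 3 := by
  obtain ⟨hv0, hv2⟩ := hv
  have hxv := mink_horocycleLine_left hv0 hvw.ne t
  have hxw := mink_horocycleLine_right hw hvw.ne t
  have hxx : mink (horocycleLine v w t) (horocycleLine v w t) = -1 ↔
      t ^ 2 = (2 + mink v w) / (-(mink v w)) ^ 3 := by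
    rw [mink_horocycleLine_self hv0 hw hvw.ne]
    have := hvw.ne
    field_simp
    constructor <;> intro h <;> linarith
  rw [← hxx]
  refine ⟨fun hx => hx.1.1.1, fun hx => ?_⟩
  have hmem : horocycleLine v w t ∈ upperHyperboloid :=
    ⟨hx, time_pos_of_mink_neg (by linarith) hv0.le hv2 (by linarith)⟩
  exact ⟨⟨hmem, hxv⟩, hmem, hxw⟩

lemma horocycle_inter_eq_image (hv : v ∈ positiveLightCone) (hw : mink w w = 0)
    (hvw : mink v w < 0) :
    horocycle v ∩ horocycle w =
      horocycleLine v w '' {t | t ^ 2 = (2 + mink v w) / (-(mink v w)) ^ 3} := by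
  have hmem := horocycleLine_mem_inter_iff hv hw hvw
  ext x
  constructor
  · intro hx
    obtain ⟨t, rfl⟩ := exists_horocycleLine_eq hv.1 hw hvw.ne hx.1.2 hx.2.2
    exact ⟨t, (hmem t).mp hx, rfl⟩
  · rintro ⟨t, ht, rfl⟩
    exact (hmem t).mpr ht

lemma horocycle_inter_nonempty_iff (hv : v ∈ positiveLightCone) (hw : mink w w = 0)
    (hvw : mink v w < 0) :
    (horocycle v ∩ horocycle w).Nonempty ↔ -(mink v w) ≤ 2 := by
  have hcube : 0 < (-(mink v w)) ^ 3 := pow_pos (neg_pos.mpr hvw) 3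
  rw [horocycle_inter_eq_image hv hw hvw, Set.image_nonempty]
  constructor
  · rintro ⟨t, ht⟩
    have hmul : t ^ 2 * (-(mink v w)) ^ 3 = 2 + mink v w := (eq_div_iff hcube.ne').mp ht
    have hnonneg : 0 ≤ 2 + mink v w := hmul ▸ mul_nonneg (sq_nonneg t) hcube.le
    linarith
  · intro hle
    exact ⟨_, Real.sq_sqrt (div_nonneg (by linarith) hcube.le)⟩

lemma horocycle_inter_eq_empty (hv : v ∈ positiveLightCone) (hw : mink w w = 0)
    (hvw : 2 < -(mink v w)) : horocycle v ∩ horocycle w = ∅ := by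
  rw [← Set.not_nonempty_iff_eq_empty, horocycle_inter_nonempty_iff hv hw (by linarith)]
  exact hvw.not_ge

lemma horocycle_inter_eq_singleton (hv : v ∈ positiveLightCone) (hw : mink w w = 0)
    (hvw : -(mink v w) = 2) : horocycle v ∩ horocycle w = {horocycleLine v w 0} := by
  have hroots : {t : ℝ | t ^ 2 = (2 + mink v w) / (-(mink v w)) ^ 3} = {0} := by
    ext t
    simp [neg_eq_iff_eq_neg.mp hvw]
  rw [horocycle_inter_eq_image hv hw (by linarith), hroots, Set.image_singleton]

lemma exists_horocycle_inter_eq_pair (hv : v ∈ positiveLightCone) (hw : mink w w = 0)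
    (hpos : 0 < -(mink v w)) (hlt : -(mink v w) < 2) :
    ∃ x y, x ≠ y ∧ horocycle v ∩ horocycle w = {x, y} := by
  have hvw : mink v w < 0 := neg_pos.mp hpos
  have hroot : 0 < (2 + mink v w) / (-(mink v w)) ^ 3 :=
    div_pos (by linarith) (pow_pos hpos 3)
  have hsqrt := Real.sqrt_pos.mpr hroot
  refine ⟨_, _, (horocycleLine_injective hv.1 hvw.ne).ne (neg_lt_self hsqrt).ne', ?_⟩
  rw [horocycle_inter_eq_image hv hw hvw, setOf_sq_eq_pair hroot.le, Set.image_pair]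

end Horocycles

lemma lambdaLength_le_one_iff : lambdaLength v w ≤ 1 ↔ -(mink v w) ≤ 2 := by
  rw [lambdaLength, Real.sqrt_le_one, div_le_one two_pos]

/-- For linearly independent `v, w ∈ L⁺`, the horocycles `h(v)` and
`h(w)` intersect iff `−⟨v,w⟩ ≤ 2` (equivalently `λ(v,w) ≤ 1`); more precisely their
intersection is empty if `−⟨v,w⟩ > 2`, a single point if `−⟨v,w⟩ = 2`, and exactly two
points if `0 < −⟨v,w⟩ < 2`. -/
theorem stmt11 (v w : Fin 3 → ℝ)
    (hv : mink v v = 0 ∧ 0 < v 2) (hw : mink w w = 0 ∧ 0 < w 2)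
    (hind : LinearIndependent ℝ ![v, w]) :
    let S : Set (Fin 3 → ℝ) :=
      {x | (mink x x = -1 ∧ 0 < x 2) ∧ mink x v = -1 ∧ mink x w = -1}
    (S.Nonempty ↔ -(mink v w) ≤ 2) ∧
      (S.Nonempty ↔ Real.sqrt (-(mink v w) / 2) ≤ 1) ∧
      (2 < -(mink v w) → S = ∅) ∧
      (-(mink v w) = 2 → ∃ x, S = {x}) ∧
      (0 < -(mink v w) ∧ -(mink v w) < 2 → ∃ x y, x ≠ y ∧ S = {x, y}) := by
  intro S
  have hS : S = horocycle v ∩ horocycle w := Set.ext fun _ => and_and_left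
  have hvw : mink v w < 0 := mink_neg_of_linearIndependent hv.1.le hv.2 hw.1.le hw.2 hind
  rw [hS]
  have hne := horocycle_inter_nonempty_iff hv hw.1 hvw
  exact ⟨hne, hne.trans lambdaLength_le_one_iff.symm,
    horocycle_inter_eq_empty hv hw.1,
    fun h => ⟨_, horocycle_inter_eq_singleton hv hw.1 h⟩,
    fun h => exists_horocycle_inter_eq_pair hv hw.1 h.1 h.2⟩
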